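/- Let μ be the measure on ℝ × (0,∞) with density 1/y² with respect to Lebesgue measure dx dy. For an integer n ≥ 1 and 0 ≤ i ≤ 2ⁿ − 1, let A_{i,n} = {(u,y) : 2^{−n} ≤ y ≤ 1, (i+1)/2ⁿ − y/2 ≤ u ≤ i/2ⁿ + y/2}. Then for all 0 ≤ i, j ≤ 2ⁿ − 1, μ(A_{i,n} ∩ A_{j,n}) = n·ln 2 − ln(|i−j|+1) + (|i−j|+1)/2ⁿ − 1. In particular μ(A_{i,n}) = n·ln 2 − 1 + 2^{−n}. -/

import Mathlib

open MeasureTheory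

noncomputable section

/-- The hyperbolic measure `y^{-2} dx dy` on the upper half plane. -/
def coneMeasure : Measure (ℝ × ℝ) :=
  (volume.restrict {p : ℝ × ℝ | 0 < p.2}).withDensity
    (fun p => ENNReal.ofReal (1 / p.2 ^ 2))

/-- The truncated triangle-like region `A_{i,n}` of the cone construction. -/
def coneRegion (n i : ℕ) : Set (ℝ × ℝ) :=
  {p : ℝ × ℝ | (2:ℝ) ^ (-(n:ℤ)) ≤ p.2 ∧ p.2 ≤ 1 ∧
    ((i:ℝ) + 1) / 2 ^ n - p.2 / 2 ≤ p.1 ∧ p.1 ≤ (i:ℝ) / 2 ^ n + p.2 / 2}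

lemma cone_integral (d : ℝ) (hd : 0 < d) (hd1 : d ≤ 1) :
    ∫⁻ y in Set.Icc d 1, ENNReal.ofReal ((y - d) / y ^ 2)
      = ENNReal.ofReal (d - Real.log d - 1) := by
  have hpos : ∀ y ∈ Set.Icc d 1, y ≠ 0 := fun y hy => (hd.trans_le hy.1).ne'
  have hc : ContinuousOn (fun y : ℝ => (y - d) / y ^ 2) (Set.Icc d 1) := by
    apply ContinuousOn.div (by fun_prop) (by fun_prop)
    intro y hy
    exact pow_ne_zero 2 (hpos y hy)
  rw [← ofReal_integral_eq_lintegral_ofReal hc.integrableOn_Icc]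
  · congr 1
    rw [integral_Icc_eq_integral_Ioc, ← intervalIntegral.integral_of_le hd1]
    rw [intervalIntegral.integral_eq_sub_of_hasDerivAt
      (f := fun y => Real.log y + d * y⁻¹)]
    · have := hd.ne'
      simp only [Real.log_one]
      field_simp
      ring
    · intro y hy
      rw [Set.uIcc_of_le hd1] at hy
      have h0 := hpos y hy
      have e : (y - d) / y ^ 2 = y⁻¹ + d * -(y ^ 2)⁻¹ := by
        field_simp
        ring
      rw [e]
      exact (Real.hasDerivAt_log h0).add ((hasDerivAt_inv h0).const_mul d)
    · apply ContinuousOn.intervalIntegrable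
      rwa [Set.uIcc_of_le hd1]
  · filter_upwards [ae_restrict_mem measurableSet_Icc] with y hy
    exact div_nonneg (sub_nonneg.2 hy.1) (sq_nonneg y)

lemma cone_aux (a b c : ℝ) (hc : 0 < c) (hd : c ≤ a - b) (hd1 : a - b ≤ 1) :
    coneMeasure {p : ℝ × ℝ | c ≤ p.2 ∧ p.2 ≤ 1 ∧ a - p.2 / 2 ≤ p.1 ∧ p.1 ≤ b + p.2 / 2}
      = ENNReal.ofReal ((a - b) - Real.log (a - b) - 1) := by
  set S := {p : ℝ × ℝ | c ≤ p.2 ∧ p.2 ≤ 1 ∧ a - p.2 / 2 ≤ p.1 ∧ p.1 ≤ b + p.2 / 2} with hS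
  have hSm : MeasurableSet S := by
    exact (measurableSet_le (f := fun _ : ℝ × ℝ => c) (g := Prod.snd) (by fun_prop) (by fun_prop)).inter
      ((measurableSet_le (f := Prod.snd) (g := fun _ : ℝ × ℝ => 1) (by fun_prop) (by fun_prop)).inter
      ((measurableSet_le (f := fun p : ℝ × ℝ => a - p.2 / 2) (g := Prod.fst)
        (by fun_prop) (by fun_prop)).inter
      (measurableSet_le (f := Prod.fst) (g := fun p : ℝ × ℝ => b + p.2 / 2)
        (by fun_prop) (by fun_prop))))
  have hsub : S ∩ {p : ℝ × ℝ | 0 < p.2} = S :=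
    Set.inter_eq_left.2 fun p hp => hc.trans_le hp.1
  have hm : Measurable (fun p : ℝ × ℝ => ENNReal.ofReal (1 / p.2 ^ 2)) := by
    fun_prop
  rw [coneMeasure, withDensity_apply _ hSm, Measure.restrict_restrict hSm, hsub,
    ← lintegral_indicator hSm, Measure.volume_eq_prod,
    lintegral_prod_symm' _ (hm.indicator hSm), ← cone_integral (a - b) (hc.trans_le hd) hd1,
    ← lintegral_indicator measurableSet_Icc]
  congr 1
  ext y
  by_cases hy : y ∈ Set.Icc (a - b) 1
  · rw [Set.indicator_of_mem hy]
    have : ∀ x : ℝ, S.indicator (fun p : ℝ × ℝ => ENNReal.ofReal (1 / p.2 ^ 2)) (x, y)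
        = (Set.Icc (a - y / 2) (b + y / 2)).indicator
          (fun _ => ENNReal.ofReal (1 / y ^ 2)) x := by
      intro x
      have : (x, y) ∈ S ↔ x ∈ Set.Icc (a - y / 2) (b + y / 2) :=
        ⟨fun h => ⟨h.2.2.1, h.2.2.2⟩, fun h => ⟨hd.trans hy.1, hy.2, h.1, h.2⟩⟩
      simp only [Set.indicator, this]
    simp_rw [this]
    rw [lintegral_indicator measurableSet_Icc, setLIntegral_const, Real.volume_Icc,
      ← ENNReal.ofReal_mul (by positivity)]
    congr 1
    ring
  · rw [Set.indicator_of_notMem hy]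
    have : ∀ x : ℝ, S.indicator (fun p : ℝ × ℝ => ENNReal.ofReal (1 / p.2 ^ 2)) (x, y) = 0 := by
      intro x
      apply Set.indicator_of_notMem
      rintro ⟨h1, h2, h3, h4⟩
      apply hy
      simp only at h1 h2 h3 h4
      exact ⟨by linarith, h2⟩
    simp_rw [this]
    exact lintegral_zero

lemma cone_le (n i j : ℕ) (hj : j < 2 ^ n) (hij : i ≤ j) :
    coneMeasure (coneRegion n i ∩ coneRegion n j)
      = ENNReal.ofReal ((n : ℝ) * Real.log 2 - Real.log (((j : ℝ) - i) + 1)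
          + (((j : ℝ) - i) + 1) / 2 ^ n - 1) := by
  have hP : (0 : ℝ) < 2 ^ n := by positivity
  have hij' : (i : ℝ) ≤ j := by exact_mod_cast hij
  have hi0 : (0 : ℝ) ≤ i := by positivity
  have hj' : (j : ℝ) + 1 ≤ 2 ^ n := by exact_mod_cast hj
  have hz : (2 : ℝ) ^ (-(n : ℤ)) = 1 / 2 ^ n := by
    rw [zpow_neg, zpow_natCast, one_div]
  have hset : coneRegion n i ∩ coneRegion n j = {p : ℝ × ℝ | 1 / 2 ^ n ≤ p.2 ∧ p.2 ≤ 1 ∧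
      ((j : ℝ) + 1) / 2 ^ n - p.2 / 2 ≤ p.1 ∧ p.1 ≤ (i : ℝ) / 2 ^ n + p.2 / 2} := by
    have e1 : ((i : ℝ) + 1) / 2 ^ n ≤ ((j : ℝ) + 1) / 2 ^ n := by gcongr
    have e2 : (i : ℝ) / 2 ^ n ≤ (j : ℝ) / 2 ^ n := by gcongr
    ext p
    simp only [coneRegion, hz, Set.mem_inter_iff, Set.mem_ofPred_eq]
    constructor
    · rintro ⟨⟨h1, h2, h3, h4⟩, h5, h6, h7, h8⟩
      exact ⟨h1, h2, h7, h4⟩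
    · rintro ⟨h1, h2, h3, h4⟩
      exact ⟨⟨h1, h2, by linarith, h4⟩, h1, h2, h3, by linarith⟩
  have hd : ((j : ℝ) + 1) / 2 ^ n - (i : ℝ) / 2 ^ n = ((j : ℝ) - i + 1) / 2 ^ n := by ring
  rw [hset, cone_aux _ _ _ (by positivity), hd, Real.log_div (by linarith) hP.ne',
    Real.log_pow]
  · congr 1
    ring
  · rw [hd]
    gcongr
    linarith
  · rw [hd, div_le_one hP]
    linarith

theorem coneMeasure_inter_coneRegion (n : ℕ) (hn : 1 ≤ n) (i j : ℕ)
    (hi : i < 2 ^ n) (hj : j < 2 ^ n) :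
    coneMeasure (coneRegion n i ∩ coneRegion n j)
      = ENNReal.ofReal ((n : ℝ) * Real.log 2
          - Real.log ((((i:ℤ) - (j:ℤ)).natAbs : ℝ) + 1)
          + ((((i:ℤ) - (j:ℤ)).natAbs : ℝ) + 1) / 2 ^ n - 1) ∧
    coneMeasure (coneRegion n i)
      = ENNReal.ofReal ((n : ℝ) * Real.log 2 - 1 + (2:ℝ) ^ (-(n:ℤ))) := by
  constructor
  · rcases le_total i j with h | h
    · rw [cone_le n i j hj h]
      have : ((((i:ℤ) - (j:ℤ)).natAbs : ℕ) : ℝ) = (j : ℝ) - i := by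
        have e : ((i:ℤ) - (j:ℤ)).natAbs = j - i := by omega
        rw [e, Nat.cast_sub h]
      rw [this]
    · rw [Set.inter_comm, cone_le n j i hi h]
      have : ((((i:ℤ) - (j:ℤ)).natAbs : ℕ) : ℝ) = (i : ℝ) - j := by
        have e : ((i:ℤ) - (j:ℤ)).natAbs = i - j := by omega
        rw [e, Nat.cast_sub h]
      rw [this]
  · have := cone_le n i i hi le_rfl
    rw [Set.inter_self] at this
    rw [this, zpow_neg, zpow_natCast]
    congr 1
    simp
    ring
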